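/- For any two distinct i-faces F and F' of a connected abstract simplicial complex K with weight function w, the function ε ↦ κ_ε(F, F') is concave on the interval [0, 1]. -/

import Mathlib

/-!
The curvature is `1 - W / d` with a constant `d ≥ 0`, so it suffices that
`ε ↦ W(m_F^ε, m_{F'}^ε)` is convex. The measure `m_F^ε` is affine in `ε` (`pm_affine`), and `W` is
jointly convex (`Wass_convex`), because a convex combination of couplings is a coupling of the
convex combinations of the marginals, and the cost is linear in the coupling.

Since `W` is a real infimum, which is `0` on the empty set, joint convexity needs couplings to
exist. The product coupling works once `m_F^ε` is known to be nonnegative (`pm_nonneg`) with total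
mass one (`sum_pm`). The latter is a double count: each of the `i + 1` facets `E` of `F` contributes
`∑_{G ⊇ E} w(G) / deg E = 1`, and an `i`-face `G ≠ F` contains a facet of `F` exactly when
`F ∩ G` has `i` elements, this facet then being `F ∩ G`.
-/

open Finset Filter

namespace SCRicci

variable {V : Type*}

/-- `K` is an abstract simplicial complex: faces are nonempty finite sets and
nonempty subsets of faces are again faces. -/
def IsComplex [DecidableEq V] (K : Finset (Finset V)) : Prop :=
  ∀ F ∈ K, F.Nonempty ∧ ∀ E : Finset V, E ⊆ F → E.Nonempty → E ∈ K

/-- The set `S_i(K)` of `i`-faces of `K` (faces of cardinality `i+1`). -/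
def faces [DecidableEq V] (K : Finset (Finset V)) (i : ℕ) : Finset (Finset V) :=
  K.filter fun F => F.card = i + 1

/-- Two `i`-faces are connected, `F ~ F'`, if they are distinct and share a common
`(i-1)`-face, which is necessarily `F ∩ F'`. -/
def Conn [DecidableEq V] (i : ℕ) (F F' : Finset V) : Prop :=
  F ≠ F' ∧ (F ∩ F').card = i

noncomputable section

/-- The degree of an `(i-1)`-face `E`: the sum of the weights of the `i`-faces
containing `E`. -/
def deg [DecidableEq V] (K : Finset (Finset V)) (w : Finset V → ℝ) (i : ℕ)
    (E : Finset V) : ℝ :=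
  ∑ F ∈ faces K i, if E ⊆ F then w F else 0

/-- `Chain K i n F F'`: there is a path of length `n` of consecutively connected
`i`-faces from `F` to `F'`. -/
def Chain [DecidableEq V] (K : Finset (Finset V)) (i : ℕ) :
    ℕ → Finset V → Finset V → Prop
  | 0, F, F' => F = F'
  | n + 1, F, F' => ∃ G ∈ faces K i, Conn i F G ∧ Chain K i n G F'

/-- The distance between two `i`-faces: the length of a shortest path of
consecutively connected `i`-faces. -/
def fdist [DecidableEq V] (K : Finset (Finset V)) (i : ℕ) (F F' : Finset V) : ℕ :=
  sInf {n | Chain K i n F F'}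

/-- `K` is connected in dimension `i`: any two `i`-faces are joined by a path of
consecutively connected `i`-faces. -/
def ComplexConnected [DecidableEq V] (K : Finset (Finset V)) (i : ℕ) : Prop :=
  ∀ F ∈ faces K i, ∀ F' ∈ faces K i, ∃ n, Chain K i n F F'

/-- The probability measure `m_F^ε` on the `i`-faces of `K`. -/
def pm [DecidableEq V] (K : Finset (Finset V)) (w : Finset V → ℝ) (i : ℕ) (ε : ℝ)
    (F F' : Finset V) : ℝ :=
  if F' = F then
    1 - ε + ε / ((i : ℝ) + 1) * ∑ E ∈ F.powersetCard i, w F / deg K w i E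
  else if F' ∈ faces K i ∧ (F ∩ F').card = i then
    ε * w F' / (((i : ℝ) + 1) * deg K w i (F ∩ F'))
  else 0

/-- The 1-Wasserstein distance between two measures on the `i`-faces of `K`:
the infimum of the transport cost over all couplings. -/
def Wass [DecidableEq V] (K : Finset (Finset V)) (i : ℕ) (μ ν : Finset V → ℝ) : ℝ :=
  sInf {c : ℝ | ∃ A : Finset V → Finset V → ℝ,
    (∀ F₁ F₂, 0 ≤ A F₁ F₂) ∧
    (∀ F₁ ∈ faces K i, ∑ F₂ ∈ faces K i, A F₁ F₂ = μ F₁) ∧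
    (∀ F₂ ∈ faces K i, ∑ F₁ ∈ faces K i, A F₁ F₂ = ν F₂) ∧
    c = ∑ F₁ ∈ faces K i, ∑ F₂ ∈ faces K i, A F₁ F₂ * (fdist K i F₁ F₂ : ℝ)}

/-- The `ε`-Ricci curvature of two distinct `i`-faces:
`κ_ε(F, F') = 1 - W(m_F^ε, m_{F'}^ε) / d(F, F')`. -/
def kappaEps [DecidableEq V] (K : Finset (Finset V)) (w : Finset V → ℝ) (i : ℕ)
    (ε : ℝ) (F F' : Finset V) : ℝ :=
  1 - Wass K i (pm K w i ε F) (pm K w i ε F') / (fdist K i F F' : ℝ)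

/-- The Ricci curvature `κ(F, F')`: the limit of `κ_ε(F, F') / ε` as `ε → 0+`. -/
def ricci [DecidableEq V] (K : Finset (Finset V)) (w : Finset V → ℝ) (i : ℕ)
    (F F' : Finset V) : ℝ :=
  limUnder (nhdsWithin (0 : ℝ) (Set.Ioi 0)) fun ε => kappaEps K w i ε F F' / ε

/-- The transport costs of all couplings of `μ` and `ν`; `Wass` is the infimum of this set. -/
def costs [DecidableEq V] (K : Finset (Finset V)) (i : ℕ) (μ ν : Finset V → ℝ) : Set ℝ :=
  {c : ℝ | ∃ A : Finset V → Finset V → ℝ,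
    (∀ F₁ F₂, 0 ≤ A F₁ F₂) ∧
    (∀ F₁ ∈ faces K i, ∑ F₂ ∈ faces K i, A F₁ F₂ = μ F₁) ∧
    (∀ F₂ ∈ faces K i, ∑ F₁ ∈ faces K i, A F₁ F₂ = ν F₂) ∧
    c = ∑ F₁ ∈ faces K i, ∑ F₂ ∈ faces K i, A F₁ F₂ * (fdist K i F₁ F₂ : ℝ)}

lemma Wass_eq [DecidableEq V] (K : Finset (Finset V)) (i : ℕ) (μ ν : Finset V → ℝ) :
    Wass K i μ ν = sInf (costs K i μ ν) := rfl

lemma costs_bddBelow [DecidableEq V] (K : Finset (Finset V)) (i : ℕ) (μ ν : Finset V → ℝ) :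
    BddBelow (costs K i μ ν) := by
  refine ⟨0, ?_⟩
  rintro c ⟨A, hA, -, -, rfl⟩
  exact sum_nonneg fun _ _ => sum_nonneg fun _ _ => mul_nonneg (hA _ _) (Nat.cast_nonneg _)

/-- The product coupling shows that probability measures have a coupling. -/
lemma costs_nonempty [DecidableEq V] (K : Finset (Finset V)) (i : ℕ) (μ ν : Finset V → ℝ)
    (hμ : ∀ G, 0 ≤ μ G) (hν : ∀ G, 0 ≤ ν G)
    (hμ1 : ∑ G ∈ faces K i, μ G = 1) (hν1 : ∑ G ∈ faces K i, ν G = 1) :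
    (costs K i μ ν).Nonempty := by
  refine ⟨_, fun G H => μ G * ν H, fun G H => mul_nonneg (hμ G) (hν H), ?_, ?_, rfl⟩
  · intro G _
    rw [← mul_sum, hν1, mul_one]
  · intro G _
    rw [← sum_mul, hμ1, one_mul]

lemma costs_combo [DecidableEq V] (K : Finset (Finset V)) (i : ℕ) {μ ν μ' ν' : Finset V → ℝ}
    {a b : ℝ} (ha : 0 ≤ a) (hb : 0 ≤ b) {c c' : ℝ}
    (hc : c ∈ costs K i μ ν) (hc' : c' ∈ costs K i μ' ν') :
    a * c + b * c' ∈
      costs K i (fun G => a * μ G + b * μ' G) (fun G => a * ν G + b * ν' G) := by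
  obtain ⟨A, hA, hA1, hA2, rfl⟩ := hc
  obtain ⟨B, hB, hB1, hB2, rfl⟩ := hc'
  refine ⟨fun G H => a * A G H + b * B G H, fun G H =>
    add_nonneg (mul_nonneg ha (hA G H)) (mul_nonneg hb (hB G H)), ?_, ?_, ?_⟩
  · intro G hG
    rw [sum_add_distrib, ← mul_sum, ← mul_sum, hA1 G hG, hB1 G hG]
  · intro G hG
    rw [sum_add_distrib, ← mul_sum, ← mul_sum, hA2 G hG, hB2 G hG]
  · simp only [mul_sum, ← sum_add_distrib]
    refine sum_congr rfl fun _ _ => sum_congr rfl fun _ _ => ?_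
    ring

lemma Wass_convex [DecidableEq V] (K : Finset (Finset V)) (i : ℕ) {μ ν μ' ν' : Finset V → ℝ}
    {a b : ℝ} (ha : 0 ≤ a) (hb : 0 ≤ b) (hab : a + b = 1)
    (h : (costs K i μ ν).Nonempty) (h' : (costs K i μ' ν').Nonempty) :
    Wass K i (fun G => a * μ G + b * μ' G) (fun G => a * ν G + b * ν' G) ≤
      a * Wass K i μ ν + b * Wass K i μ' ν' := by
  refine le_of_forall_pos_le_add fun δ hδ => ?_
  obtain ⟨c, hc, hcl⟩ := exists_lt_of_csInf_lt h (lt_add_of_pos_right _ hδ)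
  obtain ⟨c', hc', hcl'⟩ := exists_lt_of_csInf_lt h' (lt_add_of_pos_right _ hδ)
  have h1 := csInf_le (costs_bddBelow K i _ _) (costs_combo K i ha hb hc hc')
  rw [← Wass_eq] at h1 hcl hcl'
  have h2 := mul_le_mul_of_nonneg_left hcl.le ha
  have h3 := mul_le_mul_of_nonneg_left hcl'.le hb
  have h4 : a * δ + b * δ = δ := by rw [← add_mul, hab, one_mul]
  linarith

lemma pm_affine [DecidableEq V] (K : Finset (Finset V)) (w : Finset V → ℝ) (i : ℕ)
    (F : Finset V) {a b : ℝ} (hab : a + b = 1) (x y : ℝ) :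
    pm K w i (a * x + b * y) F = fun G => a * pm K w i x F G + b * pm K w i y F G := by
  funext G
  obtain rfl : b = 1 - a := by linarith
  unfold pm
  split_ifs <;> ring

lemma deg_nonneg [DecidableEq V] {K : Finset (Finset V)} {w : Finset V → ℝ} (i : ℕ)
    (hw : ∀ F ∈ K, 0 < w F) (E : Finset V) : 0 ≤ deg K w i E := by
  refine sum_nonneg fun G hG => ?_
  split_ifs
  · exact (hw G (mem_filter.1 hG).1).le
  · exact le_rfl

lemma deg_pos [DecidableEq V] {K : Finset (Finset V)} {w : Finset V → ℝ} {i : ℕ}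
    (hw : ∀ F ∈ K, 0 < w F) {E F : Finset V} (hF : F ∈ faces K i) (hE : E ⊆ F) :
    0 < deg K w i E := by
  refine sum_pos' (fun G hG => ?_) ⟨F, hF, ?_⟩
  · split_ifs
    · exact (hw G (mem_filter.1 hG).1).le
    · exact le_rfl
  · rw [if_pos hE]
    exact hw F (mem_filter.1 hF).1

lemma pm_nonneg [DecidableEq V] {K : Finset (Finset V)} {w : Finset V → ℝ} {i : ℕ}
    (hw : ∀ F ∈ K, 0 < w F) {F : Finset V} (hF : F ∈ faces K i) {ε : ℝ}
    (hε : ε ∈ Set.Icc (0 : ℝ) 1) (G : Finset V) : 0 ≤ pm K w i ε F G := by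
  have hi : (0 : ℝ) ≤ (i : ℝ) + 1 := by positivity
  unfold pm
  split_ifs with h1 h2
  · refine add_nonneg (by linarith [hε.2]) (mul_nonneg (div_nonneg hε.1 hi) ?_)
    exact sum_nonneg fun E _ =>
      div_nonneg (hw F (mem_filter.1 hF).1).le (deg_nonneg i hw E)
  · exact div_nonneg (mul_nonneg hε.1 (hw G (mem_filter.1 h2.1).1).le)
      (mul_nonneg hi (deg_nonneg i hw _))
  · exact le_rfl

/-- Among the facets of `F`, only `F ∩ G` can lie in a different `i`-face `G`. -/
lemma facet_sum [DecidableEq V] {F G : Finset V} {i : ℕ} (hF : F.card = i + 1)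
    (hG : G.card = i + 1) (hne : G ≠ F) (f : Finset V → ℝ) :
    (∑ E ∈ F.powersetCard i, if E ⊆ G then f E else 0) =
      if (F ∩ G).card = i then f (F ∩ G) else 0 := by
  have hle : (F ∩ G).card ≤ i := by
    by_contra! hlt
    have h1 : F ∩ G = F := eq_of_subset_of_card_le inter_subset_left (by omega)
    have h2 : F ∩ G = G := eq_of_subset_of_card_le inter_subset_right (by omega)
    exact hne (h2.symm.trans h1)
  have key : ∀ E ∈ F.powersetCard i, E ⊆ G → E = F ∩ G := by
    intro E hE hEG
    rw [mem_powersetCard] at hE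
    exact eq_of_subset_of_card_le (subset_inter hE.1 hEG) (by omega)
  split_ifs with hc
  · rw [sum_eq_single (F ∩ G)]
    · rw [if_pos inter_subset_right]
    · intro E hE hEne
      exact if_neg fun h => hEne (key E hE h)
    · intro h
      exact absurd (mem_powersetCard.2 ⟨inter_subset_left, hc⟩) h
  · refine sum_eq_zero fun E hE => if_neg fun h => hc ?_
    rw [← key E hE h]
    exact (mem_powersetCard.1 hE).2

lemma sum_pm [DecidableEq V] {K : Finset (Finset V)} {w : Finset V → ℝ} {i : ℕ}
    (hw : ∀ F ∈ K, 0 < w F) {F : Finset V} (hF : F ∈ faces K i) (ε : ℝ) :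
    ∑ G ∈ faces K i, pm K w i ε F G = 1 := by
  have hFc : F.card = i + 1 := (mem_filter.1 hF).2
  have hi : (i : ℝ) + 1 ≠ 0 := by positivity
  have hcount : ∑ G ∈ faces K i, ∑ E ∈ F.powersetCard i,
      (if E ⊆ G then w G / deg K w i E else 0) = (i : ℝ) + 1 := by
    rw [sum_comm]
    have h1 : ∀ E ∈ F.powersetCard i,
        ∑ G ∈ faces K i, (if E ⊆ G then w G / deg K w i E else 0) = 1 := by
      intro E hE
      have hd := (deg_pos hw hF (mem_powersetCard.1 hE).1).ne'
      rw [← div_self hd]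
      conv_rhs => enter [1]; unfold deg
      rw [sum_div]
      refine sum_congr rfl fun G _ => ?_
      split_ifs
      · rfl
      · rw [zero_div]
    rw [sum_congr rfl h1, sum_const, card_powersetCard, hFc, nsmul_eq_mul, mul_one,
      Nat.choose_succ_self_right]
    push_cast
    rfl
  have hterm : ∀ G ∈ faces K i, pm K w i ε F G = (if G = F then 1 - ε else 0) +
      ε / ((i : ℝ) + 1) * ∑ E ∈ F.powersetCard i,
        (if E ⊆ G then w G / deg K w i E else 0) := by
    intro G hG
    unfold pm
    by_cases h : G = F
    · subst h
      rw [if_pos rfl, if_pos rfl]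
      congr 2
      exact sum_congr rfl fun E hE => (if_pos (mem_powersetCard.1 hE).1).symm
    · rw [if_neg h, if_neg h, facet_sum hFc (mem_filter.1 hG).2 h fun E => w G / deg K w i E]
      by_cases hc : (F ∩ G).card = i
      · rw [if_pos ⟨hG, hc⟩, if_pos hc, div_mul_div_comm, zero_add]
      · rw [if_neg (fun h => hc h.2), if_neg hc, mul_zero, add_zero]
  rw [sum_congr rfl hterm, sum_add_distrib, ← mul_sum, hcount, sum_ite_eq' , if_pos hF,
    div_mul_cancel₀ _ hi]
  ring

/-- For any two distinct `i`-faces `F`, `F'` of a connected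
abstract simplicial complex with (positive) weight function `w`, the function
`ε ↦ κ_ε(F, F')` is concave on `[0, 1]`. -/
theorem kappaEps_concave {V : Type*} [Fintype V] [DecidableEq V]
    (K : Finset (Finset V)) (i : ℕ) (hi : 1 ≤ i)
    (hK : IsComplex K) (hconn : ComplexConnected K i)
    (w : Finset V → ℝ) (hwpos : ∀ F ∈ K, 0 < w F)
    (F F' : Finset V) (hF : F ∈ faces K i) (hF' : F' ∈ faces K i) (hne : F ≠ F') :
    ConcaveOn ℝ (Set.Icc (0 : ℝ) 1) fun ε => kappaEps K w i ε F F' := by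
  have hne' : ∀ ε ∈ Set.Icc (0 : ℝ) 1,
      (costs K i (pm K w i ε F) (pm K w i ε F')).Nonempty := fun ε hε =>
    costs_nonempty K i _ _ (pm_nonneg hwpos hF hε) (pm_nonneg hwpos hF' hε)
      (sum_pm hwpos hF ε) (sum_pm hwpos hF' ε)
  refine ⟨convex_Icc 0 1, fun x hx y hy a b ha hb hab => ?_⟩
  have hW := Wass_convex K i ha hb hab (hne' x hx) (hne' y hy)
  rw [← pm_affine K w i F hab, ← pm_affine K w i F' hab] at hW
  have hdiv := div_le_div_of_nonneg_right hW (Nat.cast_nonneg (α := ℝ) (fdist K i F F'))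
  simp only [smul_eq_mul, kappaEps]
  rw [add_div, mul_div_assoc, mul_div_assoc] at hdiv
  linarith

end
end SCRicci
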